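/- Let G ≅ SL₂(2^f) with f ≥ 2. Then G has exactly four irreducible character codegrees, namely cod(G) = {1, 2^{2f} − 2^f, 2^{2f} + 2^f, 2^{2f} − 1}. -/

import Mathlib

open CategoryTheory

noncomputable def repKer {G : Type} [Group G] (V : FDRep ℂ G) : Subgroup G :=
  (Representation.asGroupHom V.ρ).ker

noncomputable def cod {G : Type} [Group G] (V : FDRep ℂ G) : ℕ :=
  (repKer V).index / Module.finrank ℂ V

noncomputable def codSet (G : Type) [Group G] : Set ℕ :=
  {n | ∃ V : FDRep ℂ G, Simple V ∧ cod V = n}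

set_option linter.unusedSectionVars false

def InvSub {G V : Type} [Group G] [AddCommGroup V] [Module ℂ V] (ρ : Representation ℂ G V)
    (W : Submodule ℂ V) : Prop := ∀ g, ∀ w ∈ W, ρ g w ∈ W

def Irr {G V : Type} [Group G] [AddCommGroup V] [Module ℂ V] (ρ : Representation ℂ G V) : Prop :=
  Nontrivial V ∧ ∀ W : Submodule ℂ V, InvSub ρ W → W = ⊥ ∨ W = ⊤

noncomputable def subRep {G V : Type} [Group G] [AddCommGroup V] [Module ℂ V]
    (ρ : Representation ℂ G V) (W : Submodule ℂ V) (hW : InvSub ρ W) : Representation ℂ G W where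
  toFun g := (ρ g).restrict (hW g)
  map_one' := by ext; simp
  map_mul' x y := by ext; simp

lemma subRep_apply {G V : Type} [Group G] [AddCommGroup V] [Module ℂ V]
    (ρ : Representation ℂ G V) (W : Submodule ℂ V) (hW : InvSub ρ W) (g : G) (w : W) :
    ((subRep ρ W hW g w : W) : V) = ρ g w := rfl

noncomputable def homOf {G : Type} [Group G] (X Y : FDRep ℂ G) (f : X →ₗ[ℂ] Y)
    (hf : ∀ g x, f (X.ρ g x) = Y.ρ g (f x)) : X ⟶ Y :=
  ⟨InducedCategory.homMk (ModuleCat.ofHom f), fun g ↦ by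
    ext x
    exact hf g x⟩

lemma hom_comm {G : Type} [Group G] {X Y : FDRep ℂ G} (f : X ⟶ Y) (g : G) (x : X) :
    f.hom.hom.hom (X.ρ g x) = Y.ρ g (f.hom.hom.hom x) :=
  ConcreteCategory.congr_hom ((forget (FGModuleCat ℂ)).congr_map (f.comm g)) x

lemma hom_ext' {G : Type} [Group G] {X Y : FDRep ℂ G} (f g : X ⟶ Y)
    (h : ∀ x : X, f.hom.hom.hom x = g.hom.hom.hom x) : f = g := by
  ext x
  exact h x

lemma inj_of_mono {G : Type} [Group G] {X Y : FDRep ℂ G} (f : X ⟶ Y) [Mono f] :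
    Function.Injective f.hom.hom.hom := by
  rw [← LinearMap.ker_eq_bot]
  have hK : InvSub X.ρ (LinearMap.ker f.hom.hom.hom) := by
    intro g w hw
    rw [LinearMap.mem_ker] at hw ⊢
    rw [hom_comm, hw, map_zero]
  let K : FDRep ℂ G := FDRep.of (subRep X.ρ _ hK)
  let i : K ⟶ X := homOf K X (LinearMap.ker f.hom.hom.hom).subtype (fun g x => rfl)
  have h0 : i ≫ f = 0 := by
    apply hom_ext'
    intro x
    exact x.2
  have h1 : i = 0 := (Preadditive.mono_iff_cancel_zero f).1 inferInstance _ i h0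
  rw [Submodule.eq_bot_iff]
  intro x hx
  have : i.hom.hom.hom (⟨x, hx⟩ : LinearMap.ker f.hom.hom.hom) = 0 := by
    rw [h1]; rfl
  exact this

lemma mono_of_inj {G : Type} [Group G] {X Y : FDRep ℂ G} (f : X ⟶ Y)
    (h : Function.Injective f.hom.hom.hom) : Mono f := by
  constructor
  intro Z a b hab
  apply hom_ext'
  intro x
  apply h
  have := congrArg (fun k : Z ⟶ Y => k.hom.hom.hom x) hab
  exact this

lemma irr_of_simple {G : Type} [Group G] (V : FDRep ℂ G) [Simple V] : Irr V.ρ := by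
  constructor
  · by_contra hn
    rw [not_nontrivial_iff_subsingleton] at hn
    apply id_nonzero V
    apply hom_ext'
    intro x
    exact Subsingleton.elim _ _
  · intro W hW
    let K : FDRep ℂ G := FDRep.of (subRep V.ρ _ hW)
    let i : K ⟶ V := homOf K V W.subtype (fun g x => rfl)
    have : Mono i := mono_of_inj i (fun a b h => Subtype.ext h)
    by_cases h : i = 0
    · left
      rw [Submodule.eq_bot_iff]
      intro x hx
      have : i.hom.hom.hom (⟨x, hx⟩ : W) = 0 := by
        rw [h]; rfl
      exact this
    · right
      have := isIso_of_mono_of_nonzero h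
      rw [Submodule.eq_top_iff']
      intro x
      have h2 : i.hom.hom.hom ((inv i).hom.hom.hom x) = x := by
        have := congrArg (fun k : V ⟶ V => k.hom.hom.hom x) (IsIso.inv_hom_id i)
        exact this
      rw [← h2]
      exact Subtype.mem _

lemma simple_of_irr {G : Type} [Group G] (V : FDRep ℂ G) (h : Irr V.ρ) : Simple V := by
  constructor
  intro Y f hf
  have hinj := inj_of_mono f
  have := h.1
  constructor
  · intro hi h0
    obtain ⟨x, hx⟩ := exists_ne (0 : V)
    apply hx
    have : f.hom.hom.hom ((inv f).hom.hom.hom x) = x := by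
      have := congrArg (fun k : V ⟶ V => k.hom.hom.hom x) (IsIso.inv_hom_id f)
      exact this
    generalize (inv f).hom.hom.hom x = y at this
    rw [← this, h0]; rfl
  · intro h0
    have hR : InvSub V.ρ (LinearMap.range f.hom.hom.hom) := by
      rintro g _ ⟨y, rfl⟩
      exact ⟨Y.ρ g y, hom_comm f g y⟩
    rcases h.2 _ hR with h1 | h1
    · exfalso; apply h0
      apply hom_ext'
      intro x
      have : f.hom.hom.hom x ∈ LinearMap.range f.hom.hom.hom := ⟨x, rfl⟩
      rw [h1] at this
      exact this
    · let e : Y ≃ₗ[ℂ] V := LinearEquiv.ofBijective f.hom.hom.hom ⟨hinj, LinearMap.range_eq_top.1 h1⟩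
      have he : ∀ y, e y = f.hom.hom.hom y := fun y => rfl
      refine ⟨⟨homOf V Y e.symm.toLinearMap ?_, ?_, ?_⟩⟩
      · intro g x
        apply e.injective
        change e (e.symm _) = e (Y.ρ g (e.symm x))
        rw [e.apply_symm_apply, he, hom_comm, ← he, e.apply_symm_apply]
      · apply hom_ext'
        intro x
        exact e.symm_apply_apply x
      · apply hom_ext'
        intro x
        exact e.apply_symm_apply x
section SLgroup
variable {F : Type} [Field F]

abbrev SL2 (F : Type) [Field F] := Matrix.SpecialLinearGroup (Fin 2) F

lemma sl_eq {g h : SL2 F} (h00 : g 0 0 = h 0 0) (h01 : g 0 1 = h 0 1)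
    (h10 : g 1 0 = h 1 0) (h11 : g 1 1 = h 1 1) : g = h := by
  ext i j
  fin_cases i <;> fin_cases j <;> assumption

def mk4 (a b c d : F) (h : a * d - b * c = 1) : SL2 F :=
  ⟨!![a, b; c, d], by rw [Matrix.det_fin_two]; simpa using h⟩

@[simp] lemma mk4_00 (a b c d : F) (h) : (mk4 a b c d h) 0 0 = a := rfl
@[simp] lemma mk4_01 (a b c d : F) (h) : (mk4 a b c d h) 0 1 = b := rfl
@[simp] lemma mk4_10 (a b c d : F) (h) : (mk4 a b c d h) 1 0 = c := rfl
@[simp] lemma mk4_11 (a b c d : F) (h) : (mk4 a b c d h) 1 1 = d := rfl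

lemma sl_mul_apply (g h : SL2 F) (i j : Fin 2) :
    (g * h) i j = g i 0 * h 0 j + g i 1 * h 1 j := by
  simp [Matrix.mul_apply, Fin.sum_univ_two]

lemma sl_det (g : SL2 F) : g 0 0 * g 1 1 - g 0 1 * g 1 0 = 1 := by
  have := g.2
  rwa [Matrix.det_fin_two] at this

lemma eq_mk4 (g : SL2 F) : g = mk4 (g 0 0) (g 0 1) (g 1 0) (g 1 1) (sl_det g) := by
  apply sl_eq <;> rfl

lemma mk4_inv (a b c d : F) (h) :
    (mk4 a b c d h)⁻¹ = mk4 d (-b) (-c) a (by linear_combination h) := by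
  rw [inv_eq_iff_mul_eq_one]
  apply sl_eq <;> simp [sl_mul_apply] <;> first | linear_combination h | ring1

/-- upper unipotent -/
def uu (x : F) : SL2 F := mk4 1 x 0 1 (by ring)
/-- lower unipotent -/
def vv (x : F) : SL2 F := mk4 1 0 x 1 (by ring)
/-- torus -/
def tt (s : Fˣ) : SL2 F := mk4 s 0 0 (s⁻¹ : Fˣ) (by simp)
/-- monomial, char 2 not needed with sign -/
def nn (s : Fˣ) : SL2 F := mk4 0 (-(s : F)) (s⁻¹ : Fˣ) 0 (by simp)

lemma uu_add (x y : F) : uu (x + y) = uu x * uu y := by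
  apply sl_eq <;> simp [uu, sl_mul_apply, add_comm]
lemma uu_zero : uu (0 : F) = 1 := by
  apply sl_eq <;> simp [uu]
lemma vv_add (x y : F) : vv (x + y) = vv x * vv y := by
  apply sl_eq <;> simp [vv, sl_mul_apply, add_comm]
lemma vv_zero : vv (0 : F) = 1 := by
  apply sl_eq <;> simp [vv]
lemma tt_mul (x y : Fˣ) : tt (x * y) = tt x * tt y := by
  apply sl_eq <;> simp [tt, sl_mul_apply, mul_comm]
lemma tt_one : tt (1 : Fˣ) = 1 := by
  apply sl_eq <;> simp [tt]
lemma tt_uu (s : Fˣ) (x : F) : tt s * uu x = uu ((s : F) * s * x) * tt s := by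
  apply sl_eq <;> simp [tt, uu, sl_mul_apply] 
  field_simp

lemma big_cell (g : SL2 F) (hc : g 1 0 ≠ 0) :
    ∃ (x y : F) (s : Fˣ), g = uu x * nn s * uu y := by
  have hd := sl_det g
  refine ⟨g 0 0 / g 1 0, g 1 1 / g 1 0, (Units.mk0 _ hc)⁻¹, ?_⟩
  apply sl_eq <;> simp [uu, nn, sl_mul_apply]
  · field_simp
  · field_simp; linear_combination -hd
  · field_simp

lemma small_cell (g : SL2 F) (hc : g 1 0 = 0) :
    ∃ (x : F) (s : Fˣ), g = uu x * tt s := by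
  have hd := sl_det g
  rw [hc] at hd
  have h1 : g 0 0 * g 1 1 = 1 := by linear_combination hd
  have h0 : g 0 0 ≠ 0 := left_ne_zero_of_mul_eq_one h1
  refine ⟨g 0 0 * g 0 1, Units.mk0 _ h0, ?_⟩
  apply sl_eq <;> simp [uu, tt, sl_mul_apply, hc]
  · field_simp
  · field_simp; linear_combination h1

lemma nn_tt (s r : Fˣ) : nn s * tt r = nn (s * r⁻¹) := by
  apply sl_eq <;> simp [nn, tt, sl_mul_apply, mul_comm]

lemma normal_top_of_uu (K : Subgroup (SL2 F)) [K.Normal] (h : ∀ x, uu x ∈ K) : K = ⊤ := by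
  have hv : ∀ x, vv x ∈ K := by
    intro x
    have := Subgroup.Normal.conj_mem (H := K) inferInstance _ (h (-x)) (nn 1)
    convert this using 1
    rw [eq_mul_inv_iff_mul_eq]
    apply sl_eq <;> simp [uu, nn, vv, sl_mul_apply]
  have hb : ∀ g : SL2 F, g 1 0 ≠ 0 → g ∈ K := by
    intro g hc
    have hd := sl_det g
    have : g = uu ((g 0 0 - 1) / g 1 0) * vv (g 1 0) * uu ((g 1 1 - 1) / g 1 0) := by
      apply sl_eq <;> simp [uu, vv, sl_mul_apply]
      · field_simp; ring
      · field_simp; linear_combination -hd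
      · field_simp; ring
    rw [this]
    exact K.mul_mem (K.mul_mem (h _) (hv _)) (h _)
  rw [Subgroup.eq_top_iff']
  intro g
  by_cases hc : g 1 0 = 0
  · have hd := sl_det g
    have h2 : vv 1 * g ∈ K := by
      apply hb
      simp only [vv, sl_mul_apply, mk4_10, mk4_11, hc]
      intro h3
      rw [hc] at hd
      have : g 0 0 = 0 := by linear_combination h3
      rw [this] at hd; simp at hd
    exact (K.mul_mem_cancel_left (hv 1)).1 h2
  · exact hb g hc

lemma uu_of_vv (K : Subgroup (SL2 F)) [K.Normal] (h : ∀ x, vv x ∈ K) (x : F) : uu x ∈ K := by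
  have := Subgroup.Normal.conj_mem (H := K) inferInstance _ (h (-x)) (nn 1)
  convert this using 1
  rw [eq_mul_inv_iff_mul_eq]
  apply sl_eq <;> simp [uu, nn, vv, sl_mul_apply]

/-- proper normal subgroups are trivial, in char 2 -/
lemma normal_bot_or_top [CharP F 2] (r : F) (hr0 : r ≠ 0) (hr1 : r ≠ 1)
    (K : Subgroup (SL2 F)) [hK : K.Normal] : K = ⊥ ∨ K = ⊤ := by
  by_cases hbot : K = ⊥
  · exact Or.inl hbot
  right
  have h2 : (2 : F) = 0 := CharTwo.two_eq_zero
  obtain ⟨k0, hk0, hk01⟩ := K.bot_or_exists_ne_one.resolve_left hbot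
  -- an element with nonzero lower left entry
  obtain ⟨k, hk, hc⟩ : ∃ k ∈ K, k 1 0 ≠ 0 := by
    by_contra! hall
    have h1 := hall k0 hk0
    have h3 := hall _ (hK.conj_mem _ hk0 (nn 1))
    have h4 := hall _ (hK.conj_mem _ hk0 (vv 1))
    have hd := sl_det k0
    simp [nn, vv, mk4_inv, sl_mul_apply] at h3 h4
    rw [h1, h3] at h4
    have h5 : k0 0 0 = k0 1 1 := by linear_combination h4
    rw [h1, h3, ← h5] at hd
    have h6 : (k0 0 0 - 1) * (k0 0 0 - 1) = 0 := by
      linear_combination hd + (1 - k0 0 0) * h2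
    have h7 : k0 0 0 = 1 := by
      have := mul_self_eq_zero.1 h6
      linear_combination this
    apply hk01
    apply sl_eq <;> simp [h7, h3, h1, ← h5]
  obtain ⟨d, c, hc, hk'⟩ : ∃ (d c : F) (hc : c ≠ 0), mk4 0 (-c⁻¹) c d (by field_simp; ring) ∈ K := by
    have hd := sl_det k
    refine ⟨k 0 0 + k 1 1, k 1 0, hc, ?_⟩
    have := hK.conj_mem _ hk (uu (- k 0 0 / k 1 0))
    convert this using 1
    rw [eq_mul_inv_iff_mul_eq]
    apply sl_eq <;> simp [uu, sl_mul_apply]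
    · field_simp; ring
    · field_simp; linear_combination hd
    · field_simp; ring
  -- torus commutator
  have hr2 : r * r ≠ 1 := by
    intro h
    apply hr1
    have : (r - 1) * (r - 1) = 0 := by linear_combination h + (1 - r) * h2
    linear_combination mul_self_eq_zero.1 this
  obtain ⟨m, hm⟩ : ∃ (m : F), mk4 (r * r) 0 m (r * r)⁻¹ (by field_simp; ring) ∈ K := by
    have h1 := K.mul_mem (hK.conj_mem _ hk' (tt (Units.mk0 r hr0))) (K.inv_mem hk')
    refine ⟨c * d * (r * r)⁻¹ - c * d, ?_⟩
    convert h1 using 1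
    apply sl_eq <;> simp [tt, mk4_inv, sl_mul_apply]
    · field_simp
    · field_simp; ring
    · field_simp
  set b := r * r with hbdef
  have hb0 : b ≠ 0 := mul_ne_zero hr0 hr0
  have hb2 : b * b ≠ 1 := by
    intro h
    apply hr2
    have : (b - 1) * (b - 1) = 0 := by linear_combination h + (1 - b) * h2
    linear_combination mul_self_eq_zero.1 this
  have hb3 : 1 - b * b ≠ 0 := fun h => hb2 (by linear_combination -h)
  apply normal_top_of_uu
  apply uu_of_vv
  intro x
  have hb4 : 1 - (b * b)⁻¹ ≠ 0 := by
    intro h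
    apply hb3
    field_simp at h
    linear_combination -h
  obtain ⟨y, rfl⟩ : ∃ y, x = y * (1 - (b * b)⁻¹) := ⟨x / (1 - (b * b)⁻¹), (div_mul_cancel₀ _ hb4).symm⟩
  have h1 := K.mul_mem (hK.conj_mem _ hm (vv y)) (K.inv_mem hm)
  convert h1 using 1
  apply sl_eq <;> simp [vv, mk4_inv, sl_mul_apply]
  · field_simp
  · field_simp; ring
  · field_simp

lemma sl_card [Fintype F] : Nat.card (SL2 F) =
    Fintype.card F * (Fintype.card F - 1) * (Fintype.card F + 1) := by
  have e : SL2 F ≃ (F × F × Fˣ) ⊕ (F × Fˣ) := by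
    classical
    refine
    { toFun := fun g => if hc : g 1 0 = 0 then
          Sum.inr (g 0 1, Units.mk0 (g 0 0) (by
            intro h; have := sl_det g; rw [h, hc] at this; simp at this))
          else Sum.inl (g 0 0, g 1 1, Units.mk0 _ hc)
      invFun := Sum.elim (fun p => mk4 p.1 ((p.1 * p.2.1 - 1) / p.2.2) p.2.2 p.2.1
          (by field_simp; ring))
          (fun p => mk4 p.2 p.1 0 (p.2⁻¹ : Fˣ) (by simp))
      left_inv := ?_
      right_inv := ?_ }
    · intro g
      have hd := sl_det g
      by_cases hc : g 1 0 = 0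
      · simp only [hc, dite_true, Sum.elim_inr]
        have : g 0 0 ≠ 0 := by
          intro h; rw [h, hc] at hd; simp at hd
        apply sl_eq <;> simp [hc]
        rw [hc] at hd
        field_simp; linear_combination -hd
      · simp only [hc, dite_false, Sum.elim_inl]
        apply sl_eq <;> simp
        field_simp; linear_combination hd
    · rintro (⟨a, d, c⟩ | ⟨b, a⟩)
      · simp
      · simp
  simp only [Nat.card_congr e, Nat.card_sum, Nat.card_prod, Nat.card_units,
    Nat.card_eq_fintype_card]
  ring

end SLgroup
set_option linter.unusedSectionVars false
section GG
variable {F : Type} [Field F] [Fintype F]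
variable {V : Type} [AddCommGroup V] [Module ℂ V]

lemma exists_psi : ∃ ψ : AddChar F ℂ, ψ.IsPrimitive := by
  obtain ⟨ψ, h⟩ := (AddChar.exists_apply_ne_zero (a := (1 : F))).2 one_ne_zero
  refine ⟨ψ, AddChar.IsPrimitive.of_ne_one ?_⟩
  rintro rfl
  simp at h

/-- projector on the isotypic part of the unipotent subgroup -/
noncomputable def ee (ρ : Representation ℂ (SL2 F) V) (ψ : AddChar F ℂ) (a : F) : Module.End ℂ V :=
  (Fintype.card F : ℂ)⁻¹ • ∑ x : F, ψ (-(a * x)) • (ρ (uu x) : Module.End ℂ V)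

variable (ρ : Representation ℂ (SL2 F) V) (ψ : AddChar F ℂ)

lemma uu_ee (a y : F) : ρ (uu y) * ee ρ ψ a = ψ (a * y) • ee ρ ψ a := by
  unfold ee
  rw [mul_smul_comm, smul_comm (ψ _), Finset.mul_sum, Finset.smul_sum (r := ψ _)]
  congr 1
  refine Fintype.sum_equiv (Equiv.addLeft y) _ _ ?_
  intro x
  rw [Equiv.coe_addLeft, uu_add, map_mul ρ, mul_smul_comm, smul_smul, ← AddChar.map_add_eq_mul]
  congr 2
  ring

lemma ee_uu (a y : F) : ee ρ ψ a * ρ (uu y) = ψ (a * y) • ee ρ ψ a := by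
  unfold ee
  rw [smul_mul_assoc, smul_comm (ψ _), Finset.sum_mul, Finset.smul_sum (r := ψ _)]
  congr 1
  refine Fintype.sum_equiv (Equiv.addRight y) _ _ ?_
  intro x
  rw [Equiv.coe_addRight, uu_add, map_mul ρ, smul_mul_assoc, smul_smul, ← AddChar.map_add_eq_mul]
  congr 2
  ring

lemma card_ne : (Fintype.card F : ℂ) ≠ 0 := by
  exact_mod_cast Fintype.card_ne_zero

lemma ee_idem (a : F) : ee ρ ψ a * ee ρ ψ a = ee ρ ψ a := by
  conv_lhs => enter [1]; unfold ee
  rw [smul_mul_assoc, Finset.sum_mul]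
  have : ∀ x : F, (ψ (-(a * x)) • (ρ (uu x) : Module.End ℂ V)) * ee ρ ψ a = ee ρ ψ a := by
    intro x
    rw [smul_mul_assoc, uu_ee, smul_smul, ← AddChar.map_add_eq_mul]
    simp
  simp only [this]
  rw [Finset.sum_const, Finset.card_univ, ← Nat.cast_smul_eq_nsmul ℂ, smul_smul,
    inv_mul_cancel₀ card_ne, one_smul]

variable {ψ}

lemma ee_sum (hψ : ψ.IsPrimitive) : ∑ a : F, ee ρ ψ a = 1 := by
  classical
  unfold ee
  rw [← Finset.smul_sum, Finset.sum_comm]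
  have : ∀ x : F, ∑ a : F, ψ (-(a * x)) • (ρ (uu x) : Module.End ℂ V) =
      if x = 0 then (Fintype.card F : ℂ) • 1 else 0 := by
    intro x
    rw [← Finset.sum_smul]
    have h := AddChar.sum_mulShift (-x) hψ
    simp only [mul_neg] at h
    rw [h]
    by_cases hx : x = 0
    · simp [hx, uu_zero]
    · simp [hx]
  simp only [this]
  simp [smul_smul]

lemma tt_ee (s : Fˣ) (a : F) : ρ (tt s) * ee ρ ψ (s * s * a) = ee ρ ψ a * ρ (tt s) := by
  unfold ee
  rw [mul_smul_comm, smul_mul_assoc, Finset.mul_sum, Finset.sum_mul]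
  congr 1
  refine Fintype.sum_equiv ((s * s).mulLeft) _ _ ?_
  intro x
  rw [Units.mulLeft_apply, mul_smul_comm, smul_mul_assoc, ← map_mul, ← map_mul]
  simp only [Units.val_mul]
  rw [tt_uu]
  congr 2
  ring

lemma ee_trace_eq [CharP F 2] (a : F) (ha : a ≠ 0) :
    LinearMap.trace ℂ V (ee ρ ψ a) = LinearMap.trace ℂ V (ee ρ ψ 1) := by
  obtain ⟨r, hr⟩ : ∃ r : F, r * r = a := by
    obtain ⟨r, hr⟩ := FiniteField.isSquare_of_char_two (F := F) (ringChar.eq F 2) a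
    exact ⟨r, hr.symm⟩
  have hr0 : r ≠ 0 := by rintro rfl; simp at hr; exact ha hr.symm
  have h := tt_ee ρ (ψ := ψ) (Units.mk0 r hr0) 1
  rw [Units.val_mk0, hr, mul_one] at h
  have h2 : ee ρ ψ 1 = ρ (tt (Units.mk0 r hr0)) * ee ρ ψ a * ρ (tt (Units.mk0 r hr0))⁻¹ := by
    rw [h, mul_assoc, ← map_mul, mul_inv_cancel, map_one, mul_one]
  rw [h2, LinearMap.trace_mul_comm, ← mul_assoc, ← map_mul, inv_mul_cancel, map_one, one_mul]

lemma ee_trace [FiniteDimensional ℂ V] (a : F) :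
    LinearMap.trace ℂ V (ee ρ ψ a) = (Module.finrank ℂ (LinearMap.range (ee ρ ψ a)) : ℂ) :=
  LinearMap.IsProj.trace (LinearMap.IsIdempotentElem.isProj_range _ (ee_idem ρ ψ a))

lemma finrank_decomp [CharP F 2] [FiniteDimensional ℂ V] (hψ : ψ.IsPrimitive) :
    Module.finrank ℂ V = Module.finrank ℂ (LinearMap.range (ee ρ ψ 0)) +
      (Fintype.card F - 1) * Module.finrank ℂ (LinearMap.range (ee ρ ψ 1)) := by
  classical
  have h := congrArg (LinearMap.trace ℂ V) (ee_sum ρ hψ)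
  rw [map_sum, LinearMap.trace_one, ← Finset.add_sum_erase _ _ (Finset.mem_univ (0 : F)),
    Finset.sum_congr rfl (fun a ha => ee_trace_eq ρ a (Finset.ne_of_mem_erase ha)),
    Finset.sum_const, ee_trace, ee_trace, Finset.card_erase_of_mem (Finset.mem_univ _),
    Finset.card_univ, nsmul_eq_mul] at h
  exact_mod_cast h.symm

lemma trivial_of_uu (h : ∀ x : F, ρ (uu x) = 1) (g : SL2 F) : ρ g = 1 := by
  have := normal_top_of_uu (MonoidHom.ker (ρ : SL2 F →* Module.End ℂ V)) (fun x => h x)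
  have h2 : g ∈ MonoidHom.ker (ρ : SL2 F →* Module.End ℂ V) := by rw [this]; trivial
  exact h2

lemma trivial_of_ee [CharP F 2] [FiniteDimensional ℂ V] (hψ : ψ.IsPrimitive)
    (h : ee ρ ψ 1 = 0) (g : SL2 F) : ρ g = 1 := by
  classical
  have h0 : ee ρ ψ 0 = 1 := by
    rw [← ee_sum ρ hψ]
    symm
    apply Finset.sum_eq_single 0 _ (by simp)
    intro a _ ha
    apply LinearMap.IsIdempotentElem.eq_zero_of_trace_eq_zero (ee_idem ρ ψ a)
    rw [ee_trace_eq ρ a ha, h, map_zero]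
  apply trivial_of_uu
  intro x
  have := uu_ee ρ ψ 0 x
  rw [h0] at this
  simpa using this

/-- nontrivial representations have dimension at least q - 1 -/
lemma finrank_ge [CharP F 2] [FiniteDimensional ℂ V] (h : ∃ g, ρ g ≠ 1) :
    Fintype.card F - 1 ≤ Module.finrank ℂ V := by
  obtain ⟨ψ, hψ⟩ := exists_psi (F := F)
  have h1 : ee ρ ψ 1 ≠ 0 := by
    intro h1
    obtain ⟨g, hg⟩ := h
    exact hg (trivial_of_ee ρ hψ h1 g)
  rw [finrank_decomp ρ hψ]
  have h2 : 1 ≤ Module.finrank ℂ (LinearMap.range (ee ρ ψ 1)) := by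
    rw [Nat.one_le_iff_ne_zero]
    intro h3
    rw [Submodule.finrank_eq_zero, LinearMap.range_eq_bot] at h3
    exact h1 h3
  nlinarith [Nat.zero_le (Fintype.card F - 1)]

/-- the anti-involution -/
def tau (g : SL2 F) : SL2 F :=
  mk4 (g 1 1) (g 0 1) (g 1 0) (g 0 0) (by linear_combination sl_det g)

lemma tau_mul (g h : SL2 F) : tau (g * h) = tau h * tau g := by
  apply sl_eq <;> simp [tau, sl_mul_apply] <;> ring
lemma tau_uu (x : F) : tau (uu x) = uu x := by
  apply sl_eq <;> simp [tau, uu]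
lemma tau_nn (x : Fˣ) : tau (nn x) = nn x := by
  apply sl_eq <;> simp [tau, nn]
lemma tau_tt (x : Fˣ) : tau (tt x) = tt x⁻¹ := by
  apply sl_eq <;> simp [tau, tt]

lemma ee_tt_ee [CharP F 2] (hψ : ψ.IsPrimitive) (s : Fˣ) (hs : s ≠ 1) :
    ee ρ ψ 1 * ρ (tt s) * ee ρ ψ 1 = 0 := by
  have h2 : (2 : F) = 0 := CharTwo.two_eq_zero
  have hs1 : (s : F) * s - 1 ≠ 0 := by
    intro h
    apply hs
    have : ((s : F) - 1) * (s - 1) = 0 := by linear_combination h + (1 - (s : F)) * h2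
    ext
    rw [Units.val_one]
    linear_combination mul_self_eq_zero.1 this
  obtain ⟨x, hx⟩ : ∃ x : F, ψ ((s : F) * s * x) ≠ ψ x := by
    have := hψ hs1
    rw [AddChar.ne_one_iff] at this
    obtain ⟨x, hx⟩ := this
    refine ⟨x, fun h => hx ?_⟩
    rw [AddChar.mulShift_apply, sub_mul, AddChar.map_sub_eq_div, one_mul, h, div_self]
    exact (AddChar.val_isUnit ψ x).ne_zero
  have h1 : ee ρ ψ 1 * ρ (tt s * uu x) * ee ρ ψ 1 =
      ψ x • (ee ρ ψ 1 * ρ (tt s) * ee ρ ψ 1) := by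
    rw [map_mul, ← mul_assoc, mul_assoc _ (ρ (uu x)), uu_ee, mul_smul_comm, one_mul]
  have h3 : ee ρ ψ 1 * ρ (tt s * uu x) * ee ρ ψ 1 =
      ψ ((s : F) * s * x) • (ee ρ ψ 1 * ρ (tt s) * ee ρ ψ 1) := by
    rw [tt_uu, map_mul, ← mul_assoc, ee_uu, smul_mul_assoc, smul_mul_assoc, one_mul]
  rw [h1] at h3
  have h4 : (ψ x - ψ ((s : F) * s * x)) • (ee ρ ψ 1 * ρ (tt s) * ee ρ ψ 1) = 0 := by
    rw [sub_smul, h3, sub_self]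
  exact (smul_eq_zero.1 h4).resolve_left (sub_ne_zero.2 (Ne.symm hx))

lemma ee_cong (a x y : F) (g : SL2 F) : ee ρ ψ a * ρ (uu x * g * uu y) * ee ρ ψ a =
    (ψ (a * x) * ψ (a * y)) • (ee ρ ψ a * ρ g * ee ρ ψ a) := by
  rw [map_mul, map_mul, ← mul_assoc, ← mul_assoc, ee_uu, mul_assoc _ (ρ (uu y)), uu_ee]
  simp only [smul_mul_assoc, mul_smul_comm, smul_smul]
  rw [mul_comm]

lemma ee_tau [CharP F 2] (hψ : ψ.IsPrimitive) (g : SL2 F) :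
    ee ρ ψ 1 * ρ (tau g) * ee ρ ψ 1 = ee ρ ψ 1 * ρ g * ee ρ ψ 1 := by
  by_cases hc : g 1 0 = 0
  · obtain ⟨x, s, rfl⟩ := small_cell g hc
    have h1 : uu x * tt s = uu x * tt s * uu 0 := by rw [uu_zero, mul_one]
    have h2 : tau (uu x * tt s) = uu 0 * tt s⁻¹ * uu x := by
      rw [tau_mul, tau_uu, tau_tt, uu_zero, one_mul]
    rw [h2, h1, ee_cong, ee_cong]
    by_cases hs : s = 1
    · subst hs
      rw [inv_one, mul_comm (ψ _)]
    · rw [ee_tt_ee ρ hψ s hs, ee_tt_ee ρ hψ s⁻¹ (by simpa using hs), smul_zero, smul_zero]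
  · obtain ⟨x, y, s, rfl⟩ := big_cell g hc
    rw [tau_mul, tau_mul, tau_uu, tau_uu, tau_nn, ← mul_assoc, ee_cong, ee_cong, mul_comm (ψ _)]

lemma ee_expand (a : F) (g h : SL2 F) :
    (ee ρ ψ a * ρ g * ee ρ ψ a) * (ee ρ ψ a * ρ h * ee ρ ψ a) =
    (Fintype.card F : ℂ)⁻¹ • ∑ x : F, ψ (-(a * x)) •
      (ee ρ ψ a * ρ (g * uu x * h) * ee ρ ψ a) := by
  have : (ee ρ ψ a * ρ g * ee ρ ψ a) * (ee ρ ψ a * ρ h * ee ρ ψ a) =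
      ee ρ ψ a * ρ g * ee ρ ψ a * (ρ h * ee ρ ψ a) := by
    rw [mul_assoc (ee ρ ψ a) (ρ h), ← mul_assoc _ (ee ρ ψ a) (ρ h * _),
      mul_assoc _ (ee ρ ψ a) (ee ρ ψ a), ee_idem]
  rw [this]
  conv_lhs => enter [1, 2]; unfold ee
  rw [mul_smul_comm, smul_mul_assoc, Finset.mul_sum, Finset.sum_mul]
  congr 1
  apply Finset.sum_congr rfl
  intro x _
  rw [mul_smul_comm, smul_mul_assoc, map_mul, map_mul]
  simp only [mul_assoc]

lemma ee_comm [CharP F 2] (hψ : ψ.IsPrimitive) (g h : SL2 F) :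
    (ee ρ ψ 1 * ρ g * ee ρ ψ 1) * (ee ρ ψ 1 * ρ h * ee ρ ψ 1) =
    (ee ρ ψ 1 * ρ h * ee ρ ψ 1) * (ee ρ ψ 1 * ρ g * ee ρ ψ 1) := by
  rw [ee_expand, ← ee_tau ρ hψ g, ← ee_tau ρ hψ h, ee_expand]
  congr 1
  apply Finset.sum_congr rfl
  intro x _
  rw [← ee_tau ρ hψ (g * uu x * h), tau_mul, tau_mul, tau_uu, mul_assoc (tau h)]

end GG
section HH
variable {F : Type} [Field F] [Fintype F]
variable {V : Type} [AddCommGroup V] [Module ℂ V]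

lemma span_orbit_inv {G : Type} [Group G] (ρ : Representation ℂ G V) (S : Set V) :
    InvSub ρ (Submodule.span ℂ {x | ∃ g : G, ∃ s ∈ S, x = ρ g s}) := by
  intro g w hw
  induction hw using Submodule.span_induction with
  | mem x hx =>
    obtain ⟨h, s, hs, rfl⟩ := hx
    apply Submodule.subset_span
    exact ⟨g * h, s, hs, by rw [map_mul]; rfl⟩
  | zero => simp
  | add x y _ _ hx hy => rw [map_add]; exact Submodule.add_mem _ hx hy
  | smul c x _ hx => rw [map_smul]; exact Submodule.smul_mem _ _ hx

lemma span_orbit_top {G : Type} [Group G] (ρ : Representation ℂ G V) (hρ : Irr ρ) (S : Set V)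
    (hS : ∃ s ∈ S, s ≠ 0) :
    Submodule.span ℂ {x | ∃ g : G, ∃ s ∈ S, x = ρ g s} = ⊤ := by
  rcases hρ.2 _ (span_orbit_inv ρ S) with h | h
  · exfalso
    obtain ⟨s, hs, hs0⟩ := hS
    apply hs0
    have : s ∈ Submodule.span ℂ {x | ∃ g : G, ∃ s ∈ S, x = ρ g s} :=
      Submodule.subset_span ⟨1, s, hs, by simp⟩
    rw [h] at this
    exact this
  · exact h

/-- the range of the projector is irreducible under the Hecke operators -/
lemma range_irr {G : Type} [Group G] (ρ : Representation ℂ G V) (hρ : Irr ρ)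
    (e : Module.End ℂ V) (W : Submodule ℂ V) (hW0 : W ≠ ⊥)
    (hW : ∀ g, ∀ w ∈ W, e (ρ g w) ∈ W) : LinearMap.range e ≤ W := by
  obtain ⟨s, hs, hs0⟩ := Submodule.exists_mem_ne_zero_of_ne_bot hW0
  have htop := span_orbit_top ρ hρ (W : Set V) ⟨s, hs, hs0⟩
  rw [LinearMap.range_eq_map, ← htop, Submodule.map_span_le]
  rintro _ ⟨g, w, hw, rfl⟩
  exact hW g w hw

lemma range_one {G : Type} [Group G] [FiniteDimensional ℂ V]
    (ρ : Representation ℂ G V) (hρ : Irr ρ)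
    (e : Module.End ℂ V) (he : e * e = e) (he0 : e ≠ 0)
    (hcomm : ∀ g h, (e * ρ g * e) * (e * ρ h * e) = (e * ρ h * e) * (e * ρ g * e)) :
    Module.finrank ℂ (LinearMap.range e) = 1 := by
  have hfix : ∀ v ∈ LinearMap.range e, e v = v := by
    rintro _ ⟨v, rfl⟩
    exact LinearMap.congr_fun he v
  have hnt : Nontrivial (LinearMap.range e) := by
    rw [Submodule.nontrivial_iff_ne_bot]
    intro h
    exact he0 (LinearMap.range_eq_bot.1 h)
  -- every Hecke operator is scalar
  have hscal : ∀ g, ∃ c : ℂ, ∀ v ∈ LinearMap.range e, e (ρ g v) = c • v := by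
    intro g
    let T : Module.End ℂ (LinearMap.range e) :=
      (e * ρ g * e).restrict (p := LinearMap.range e) (q := LinearMap.range e)
        (fun x _ => ⟨ρ g (e x), rfl⟩)
    obtain ⟨c, hc⟩ := Module.End.exists_eigenvalue T
    obtain ⟨v, hv⟩ := hc.exists_hasEigenvector
    have hv1 := hv.apply_eq_smul
    have hv2 := hv.2
    refine ⟨c, ?_⟩
    let W : Submodule ℂ V := LinearMap.ker ((e * ρ g * e) - c • (1 : Module.End ℂ V)) ⊓
      LinearMap.range e
    have hWm : ∀ w, w ∈ W ↔ e (ρ g (e w)) = c • w ∧ w ∈ LinearMap.range e := by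
      intro w
      simp only [W, Submodule.mem_inf, LinearMap.mem_ker, LinearMap.sub_apply, sub_eq_zero]
      rfl
    have hW : LinearMap.range e ≤ W := by
      apply range_irr ρ hρ e W
      · rw [Submodule.ne_bot_iff]
        refine ⟨v, ?_, ?_⟩
        · rw [hWm]
          refine ⟨?_, v.2⟩
          exact congrArg Subtype.val hv1
        · simpa using hv2
      · intro h w hw
        rw [hWm] at hw ⊢
        refine ⟨?_, ⟨_, rfl⟩⟩
        have h1 := LinearMap.congr_fun (hcomm g h) w
        simp only [Module.End.mul_apply] at h1
        rw [hfix (e (ρ h (e w))) ⟨_, rfl⟩, hfix (e (ρ g (e w))) ⟨_, rfl⟩, hw.1, map_smul,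
          map_smul, hfix w hw.2] at h1
        rw [hfix (e (ρ h w)) ⟨_, rfl⟩]
        exact h1
    intro w hw
    have := (hWm w).1 (hW hw)
    rw [hfix w hw] at this
    exact this.1
  obtain ⟨v, hv⟩ := exists_ne (0 : LinearMap.range e)
  rw [finrank_eq_one_iff_of_nonzero' v hv]
  have hle : LinearMap.range e ≤ Submodule.span ℂ {(v : V)} := by
    apply range_irr ρ hρ e
    · simpa using hv
    · intro g w hw
      obtain ⟨a, rfl⟩ := Submodule.mem_span_singleton.1 hw
      obtain ⟨c, hc⟩ := hscal g
      rw [map_smul, map_smul, hc v v.2, smul_smul]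
      exact Submodule.smul_mem _ _ (Submodule.mem_span_singleton_self _)
  intro w
  obtain ⟨a, ha⟩ := Submodule.mem_span_singleton.1 (hle w.2)
  exact ⟨a, Subtype.ext ha⟩

variable (ρ : Representation ℂ (SL2 F) V)

lemma finrank_le [FiniteDimensional ℂ V] (ψ : AddChar F ℂ) (hρ : Irr ρ)
    (h0 : ee ρ ψ 0 ≠ 0) : Module.finrank ℂ V ≤ Fintype.card F + 1 := by
  have hnt : Nontrivial (LinearMap.range (ee ρ ψ 0)) := by
    rw [Submodule.nontrivial_iff_ne_bot]
    intro h
    exact h0 (LinearMap.range_eq_bot.1 h)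
  obtain ⟨s, hs⟩ := IsCyclic.exists_generator (α := Fˣ)
  have hst : ∀ x ∈ LinearMap.range (ee ρ ψ 0), ρ (tt s) x ∈ LinearMap.range (ee ρ ψ 0) := by
    rintro _ ⟨x, rfl⟩
    refine ⟨ρ (tt s) x, ?_⟩
    have := LinearMap.congr_fun (tt_ee ρ (ψ := ψ) s 0) x
    rw [mul_zero] at this
    exact this.symm
  obtain ⟨c, hc⟩ := Module.End.exists_eigenvalue ((ρ (tt s)).restrict hst)
  obtain ⟨v, hv⟩ := hc.exists_hasEigenvector
  have hv1 : ρ (tt s) (v : V) = c • (v : V) := congrArg Subtype.val hv.apply_eq_smul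
  have hv0 : (v : V) ≠ 0 := by simpa using hv.2
  have hvu : ∀ x, ρ (uu x) (v : V) = v := by
    intro x
    obtain ⟨y, hy⟩ := v.2
    rw [← hy]
    have := LinearMap.congr_fun (uu_ee ρ ψ 0 x) y
    simpa using this
  have hvt : ∀ r : Fˣ, ∃ a : ℂ, ρ (tt r) (v : V) = a • (v : V) := by
    intro r
    obtain ⟨n, rfl⟩ := (mem_powers_iff_mem_zpowers (x := s) (y := r)).2 (hs r)
    refine ⟨c ^ n, ?_⟩
    change ρ (tt (s ^ n)) (v : V) = c ^ n • (v : V)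
    induction n with
    | zero => simp [tt_one]
    | succ n ih =>
      rw [pow_succ' s, tt_mul, map_mul, Module.End.mul_apply]
      rw [ih, map_smul, hv1, smul_smul, pow_succ]
  let b : Option F → V := fun o => o.elim (v : V) (fun x => ρ (uu x * nn 1) v)
  have htop : Submodule.span ℂ (Set.range b) = ⊤ := by
    rw [eq_top_iff, ← span_orbit_top ρ hρ {(v : V)} ⟨v, rfl, hv0⟩, Submodule.span_le]
    rintro _ ⟨g, _, rfl, rfl⟩
    by_cases hg : g 1 0 = 0
    · obtain ⟨x, r, rfl⟩ := small_cell g hg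
      obtain ⟨a, ha⟩ := hvt r
      rw [map_mul, Module.End.mul_apply, ha, map_smul, hvu]
      exact Submodule.smul_mem _ _ (Submodule.subset_span ⟨none, rfl⟩)
    · obtain ⟨x, y, r, rfl⟩ := big_cell g hg
      obtain ⟨a, ha⟩ := hvt r⁻¹
      have h1 : nn r = nn 1 * tt r⁻¹ := by rw [nn_tt]; simp
      rw [map_mul, Module.End.mul_apply, hvu, h1, ← mul_assoc, map_mul, Module.End.mul_apply,
        ha, map_smul]
      exact Submodule.smul_mem _ _ (Submodule.subset_span ⟨some x, rfl⟩)
  have := finrank_range_le_card (R := ℂ) b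
  rw [Set.finrank, htop, finrank_top, Fintype.card_option] at this
  exact this

/-- classification of degrees -/
lemma finrank_cases [CharP F 2] [FiniteDimensional ℂ V] (hρ : Irr ρ) (hn : ∃ g, ρ g ≠ 1)
    (hq : 4 ≤ Fintype.card F) :
    Module.finrank ℂ V = Fintype.card F - 1 ∨ Module.finrank ℂ V = Fintype.card F ∨
      Module.finrank ℂ V = Fintype.card F + 1 := by
  obtain ⟨ψ, hψ⟩ := exists_psi (F := F)
  have h1 : ee ρ ψ 1 ≠ 0 := by
    intro h1
    obtain ⟨g, hg⟩ := hn
    exact hg (trivial_of_ee ρ hψ h1 g)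
  have h2 := range_one ρ hρ (ee ρ ψ 1) (ee_idem ρ ψ 1) h1 (ee_comm ρ hψ)
  have h3 := finrank_decomp ρ hψ
  rw [h2, mul_one] at h3
  by_cases h0 : ee ρ ψ 0 = 0
  · rw [h0, LinearMap.range_zero, finrank_bot] at h3
    omega
  · have := finrank_le ρ ψ hρ h0
    omega

/-- cuspidal representations -/
lemma finrank_cusp [CharP F 2] [FiniteDimensional ℂ V] (hρ : Irr ρ)
    (hU : ∀ v, (∀ x, ρ (uu x) v = v) → v = 0) :
    Module.finrank ℂ V = Fintype.card F - 1 := by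
  obtain ⟨ψ, hψ⟩ := exists_psi (F := F)
  have := hρ.1
  have h0 : ee ρ ψ 0 = 0 := by
    ext y
    apply hU
    intro x
    have := LinearMap.congr_fun (uu_ee ρ ψ 0 x) y
    simpa using this
  have h1 : ee ρ ψ 1 ≠ 0 := by
    intro h1
    obtain ⟨v, hv⟩ := exists_ne (0 : V)
    apply hv
    apply hU
    intro x
    rw [trivial_of_ee ρ hψ h1]; rfl
  have h2 := range_one ρ hρ (ee ρ ψ 1) (ee_idem ρ ψ 1) h1 (ee_comm ρ hψ)
  have h3 := finrank_decomp ρ hψ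
  rw [h2, mul_one, h0, LinearMap.range_zero, finrank_bot] at h3
  omega

end HH
section EX
variable {F : Type} [Field F] [Fintype F]
variable {V : Type} [AddCommGroup V] [Module ℂ V]

lemma exists_compl {G : Type} [Group G] [Finite G] (ρ : Representation ℂ G V) (W : Submodule ℂ V)
    (hW : InvSub ρ W) : ∃ W' : Submodule ℂ V, InvSub ρ W' ∧ IsCompl W W' := by
  have : NeZero (Nat.card G : ℂ) := ⟨by exact_mod_cast Nat.card_pos.ne'⟩
  let S : Subrepresentation ρ := ⟨W, fun g v hv => hW g v hv⟩
  obtain ⟨T, hT⟩ := exists_isCompl S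
  refine ⟨T.toSubmodule, fun g v hv => T.apply_mem_toSubmodule g hv, ?_⟩
  rw [isCompl_iff, disjoint_iff, codisjoint_iff] at hT ⊢
  refine ⟨?_, ?_⟩
  · exact congrArg Subrepresentation.toSubmodule hT.1
  · exact congrArg Subrepresentation.toSubmodule hT.2

lemma exists_irr_sub {G : Type} [Group G] [FiniteDimensional ℂ V] (ρ : Representation ℂ G V)
    (W : Submodule ℂ V) (hW : InvSub ρ W) (hW0 : W ≠ ⊥) :
    ∃ (W' : Submodule ℂ V) (h : InvSub ρ W'), W' ≤ W ∧ Irr (subRep ρ W' h) := by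
  obtain ⟨M, ⟨hM, hMW, hM0⟩, hmin⟩ := (wellFounded_lt (α := Submodule ℂ V)).has_min
    {W' | InvSub ρ W' ∧ W' ≤ W ∧ W' ≠ ⊥} ⟨W, hW, le_rfl, hW0⟩
  refine ⟨M, hM, hMW, ?_, ?_⟩
  · rwa [Submodule.nontrivial_iff_ne_bot]
  · intro N hN
    by_cases hN0 : N = ⊥
    · exact Or.inl hN0
    right
    have hle : N.map M.subtype ≤ M := Submodule.map_subtype_le M N
    have h1 : ¬ (N.map M.subtype < M) := by
      apply hmin
      refine ⟨?_, hle.trans hMW, ?_⟩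
      · rintro g _ ⟨n, hn, rfl⟩
        exact ⟨_, hN g n hn, rfl⟩
      · intro h
        apply hN0
        rw [Submodule.eq_bot_iff]
        intro n hn
        have h5 : (n : V) ∈ N.map M.subtype := ⟨n, hn, rfl⟩
        rw [h] at h5
        exact Subtype.ext h5
    have h2 : N.map M.subtype = M := by
      by_contra h3
      exact h1 (lt_of_le_of_ne hle h3)
    rw [Submodule.eq_top_iff']
    intro x
    have hx : (x : V) ∈ N.map M.subtype := by rw [h2]; exact x.2
    obtain ⟨n, hn, hnx⟩ := hx
    have : n = x := Subtype.ext hnx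
    rwa [← this]

lemma sub_ge [CharP F 2] [FiniteDimensional ℂ V] (ρ : Representation ℂ (SL2 F) V)
    (hfix : ∀ v, (∀ g, ρ g v = v) → v = 0) (W : Submodule ℂ V) (hW : InvSub ρ W) (hW0 : W ≠ ⊥) :
    Fintype.card F - 1 ≤ Module.finrank ℂ W := by
  apply finrank_ge (subRep ρ W hW)
  by_contra! hall
  obtain ⟨w, hw, hw0⟩ := Submodule.exists_mem_ne_zero_of_ne_bot hW0
  apply hw0
  apply hfix
  intro g
  have := LinearMap.congr_fun (hall g) ⟨w, hw⟩
  exact congrArg Subtype.val this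

lemma irr_of_small [CharP F 2] [FiniteDimensional ℂ V] [Nontrivial V]
    (ρ : Representation ℂ (SL2 F) V)
    (hfix : ∀ v, (∀ g, ρ g v = v) → v = 0)
    (hd : Module.finrank ℂ V < 2 * (Fintype.card F - 1)) : Irr ρ := by
  refine ⟨inferInstance, ?_⟩
  intro W hW
  by_contra! h
  classical
  obtain ⟨W', hW', hc⟩ := exists_compl ρ W hW
  have h1 := sub_ge ρ hfix W hW h.1
  have h2 := sub_ge ρ hfix W' hW' (by
    rintro rfl
    apply h.2
    simpa using hc.sup_eq_top)
  have h3 := Submodule.finrank_add_eq_of_isCompl hc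
  omega

/-- action on the plane -/
def act (g : SL2 F) (v : F × F) : F × F :=
  (g 0 0 * v.1 + g 0 1 * v.2, g 1 0 * v.1 + g 1 1 * v.2)

lemma act_one (v : F × F) : act (1 : SL2 F) v = v := by
  simp [act]

lemma act_mul (g h : SL2 F) (v : F × F) : act (g * h) v = act g (act h v) := by
  simp only [act, sl_mul_apply]
  ext <;> simp <;> ring

noncomputable def planeRep : Representation ℂ (SL2 F) (F × F → ℂ) where
  toFun g := LinearMap.funLeft ℂ ℂ (act g⁻¹)
  map_one' := by
    ext h v
    simp [act_one]
  map_mul' g h := by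
    apply LinearMap.ext
    intro k
    funext v
    simp [LinearMap.funLeft_apply, act_mul]

lemma planeRep_apply (g : SL2 F) (h : F × F → ℂ) (v : F × F) :
    planeRep g h v = h (act g⁻¹ v) := rfl

def homog (χ : Fˣ →* ℂˣ) : Submodule ℂ (F × F → ℂ) where
  carrier := {h | h 0 = 0 ∧ ∀ (a : Fˣ) (v : F × F), h ((a : F) • v) = (χ a : ℂ) * h v}
  zero_mem' := by simp
  add_mem' := by
    rintro a b ⟨ha, ha'⟩ ⟨hb, hb'⟩
    refine ⟨by simp [ha, hb], fun c v => ?_⟩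
    simp only [Pi.add_apply, ha', hb']; ring
  smul_mem' := by
    rintro c a ⟨ha, ha'⟩
    refine ⟨by simp [ha], fun d v => ?_⟩
    simp only [Pi.smul_apply, ha', smul_eq_mul]; ring

lemma homog_inv (χ : Fˣ →* ℂˣ) : InvSub planeRep (homog χ) := by
  rintro g h ⟨h0, h1⟩
  refine ⟨?_, ?_⟩
  · rw [planeRep_apply]
    have : act g⁻¹ 0 = (0 : F × F) := by ext <;> simp [act]
    rw [this, h0]
  · intro a v
    rw [planeRep_apply, planeRep_apply, ← h1]
    congr 1
    ext <;> simp [act] <;> ring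

lemma homog_finrank (χ : Fˣ →* ℂˣ) : Module.finrank ℂ (homog χ) = Fintype.card F + 1 := by
  classical
  let L : homog χ →ₗ[ℂ] (Option F → ℂ) :=
    { toFun := fun h o => o.elim ((h : F × F → ℂ) (1, 0)) (fun x => (h : F × F → ℂ) (x, 1))
      map_add' := by
        intro a b; funext o; cases o <;> rfl
      map_smul' := by
        intro a b; funext o; cases o <;> rfl }
  have hinj : Function.Injective L := by
    rw [← LinearMap.ker_eq_bot, Submodule.eq_bot_iff]
    rintro ⟨h, h0, h1⟩ hk
    rw [LinearMap.mem_ker] at hk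
    have hn : h (1, 0) = 0 := congrFun hk none
    have hs : ∀ x, h (x, 1) = 0 := fun x => congrFun hk (some x)
    apply Subtype.ext
    funext v
    obtain ⟨x, y⟩ := v
    change h (x, y) = 0
    by_cases hy : y = 0
    · subst hy
      by_cases hx : x = 0
      · subst hx; exact h0
      · have := h1 (Units.mk0 x hx) (1, 0)
        rw [hn] at this
        simpa using this
    · have := h1 (Units.mk0 y hy) (x / y, 1)
      rw [hs] at this
      simpa [mul_div_cancel₀ _ hy] using this
  have hsurj : Function.Surjective L := by
    intro k
    let h : F × F → ℂ := fun v => if hy : v.2 = 0 then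
      (if hx : v.1 = 0 then 0 else (χ (Units.mk0 _ hx) : ℂ) * k none)
      else (χ (Units.mk0 _ hy) : ℂ) * k (some (v.1 / v.2))
    refine ⟨⟨h, ?_, ?_⟩, ?_⟩
    · simp [h]
    · rintro a ⟨x, y⟩
      by_cases hy : y = 0
      · by_cases hx : x = 0
        · simp [h, hx, hy]
        · have : Units.mk0 ((a : F) * x) (mul_ne_zero a.ne_zero hx) = a * Units.mk0 x hx := by
            ext; simp
          simp [h, hx, hy, this, mul_assoc]
      · have : Units.mk0 ((a : F) * y) (mul_ne_zero a.ne_zero hy) = a * Units.mk0 y hy := by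
          ext; simp
        have h3 : (a : F) * x / (a * y) = x / y := mul_div_mul_left _ _ a.ne_zero
        simp [h, hy, this, mul_assoc, h3]
    · funext o
      cases o with
      | none => simp [L, h]
      | some x => simp [L, h]
  rw [LinearEquiv.finrank_eq (LinearEquiv.ofBijective L ⟨hinj, hsurj⟩)]
  simp

lemma plane_fixed (h : F × F → ℂ) (hf : ∀ g, planeRep g h = h) (v : F × F) (hv : v ≠ 0) :
    h v = h (1, 0) := by
  obtain ⟨x, y⟩ := v
  obtain ⟨g, hg⟩ : ∃ g : SL2 F, act g (1, 0) = (x, y) := by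
    by_cases hx : x = 0
    · have hy : y ≠ 0 := by rintro rfl; subst hx; exact hv rfl
      exact ⟨mk4 x (-y⁻¹) y 0 (by field_simp; ring), by simp [act]⟩
    · exact ⟨mk4 x 0 y x⁻¹ (by field_simp; ring), by simp [act]⟩
  have := congrFun (hf g⁻¹) (1, 0)
  rw [planeRep_apply, inv_inv, hg] at this
  exact this

lemma exists_q_add_one [CharP F 2] (hq : 4 ≤ Fintype.card F) :
    ∃ V : FDRep ℂ (SL2 F), Irr V.ρ ∧ Module.finrank ℂ V = Fintype.card F + 1 := by
  classical
  obtain ⟨s, hs⟩ : ∃ s : Fˣ, s ≠ 1 := by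
    have : 1 < Fintype.card Fˣ := by rw [Fintype.card_units]; omega
    exact Fintype.exists_ne_of_one_lt_card this 1
  obtain ⟨χ, hχ⟩ := CommGroup.exists_apply_ne_one_of_hasEnoughRootsOfUnity Fˣ ℂ hs
  refine ⟨FDRep.of (subRep planeRep (homog χ) (homog_inv χ)), ?_, homog_finrank χ⟩
  change Irr (subRep planeRep (homog χ) (homog_inv χ))
  have hd := homog_finrank χ
  have : Nontrivial (homog χ) := Module.nontrivial_of_finrank_pos (R := ℂ) (by omega)
  apply irr_of_small
  · rintro ⟨h, h0, h1⟩ hf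
    have hf' : ∀ g, planeRep g h = h := fun g => congrArg Subtype.val (hf g)
    have h2 := plane_fixed h hf'
    have h3 : h (1, 0) = 0 := by
      have h4 := h1 s (1, 0)
      rw [h2 _ (by simp)] at h4
      by_contra h5
      apply hχ
      ext
      rw [Units.val_one]
      exact mul_right_cancel₀ h5 (by rw [← h4, one_mul])
    apply Subtype.ext
    funext v
    change h v = 0
    by_cases hv : v = 0
    · rw [hv, h0]
    · rw [h2 v hv, h3]
  · rw [hd]; omega

lemma exists_q [CharP F 2] (hq : 4 ≤ Fintype.card F) :
    ∃ V : FDRep ℂ (SL2 F), Irr V.ρ ∧ Module.finrank ℂ V = Fintype.card F := by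
  classical
  have hinv := homog_inv (1 : Fˣ →* ℂˣ)
  let H := subRep planeRep (homog (1 : Fˣ →* ℂˣ)) hinv
  let k : F × F → ℂ := fun v => if v = 0 then 0 else 1
  have hk : k ∈ homog (1 : Fˣ →* ℂˣ) := by
    refine ⟨by simp [k], ?_⟩
    intro a v
    simp [k]
  let k' : homog (1 : Fˣ →* ℂˣ) := ⟨k, hk⟩
  have hk0 : k' ≠ 0 := by
    intro h
    have := congrFun (congrArg Subtype.val h) (1, 0)
    simp [k', k] at this
  have hfix : ∀ v, (∀ g, H g v = v) → v ∈ Submodule.span ℂ {k'} := by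
    rintro ⟨h, h0, h1⟩ hf
    have hf' : ∀ g, planeRep g h = h := fun g => congrArg Subtype.val (hf g)
    have h2 := plane_fixed h hf'
    rw [Submodule.mem_span_singleton]
    refine ⟨h (1, 0), ?_⟩
    apply Subtype.ext
    funext v
    change h (1, 0) * k v = h v
    by_cases hv : v = 0
    · simp [hv, h0, k]
    · simp [hv, k, h2 v hv]
  have hkf : ∀ g, H g k' = k' := by
    intro g
    apply Subtype.ext
    funext v
    change k (act g⁻¹ v) = k v
    have hz : ∀ g : SL2 F, act g 0 = (0 : F × F) := by intro g; ext <;> simp [act]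
    have : act g⁻¹ v = 0 ↔ v = 0 := by
      constructor
      · intro h
        have := congrArg (act g) h
        rwa [← act_mul, mul_inv_cancel, act_one, hz] at this
      · rintro rfl; exact hz _
    simp [k, this]
  have hSinv : InvSub H (Submodule.span ℂ {k'}) := by
    intro g w hw
    obtain ⟨a, rfl⟩ := Submodule.mem_span_singleton.1 hw
    rw [map_smul, hkf]
    exact hw
  obtain ⟨W, hW, hc⟩ := exists_compl H _ hSinv
  have hd := homog_finrank (1 : Fˣ →* ℂˣ)
  have h3 := Submodule.finrank_add_eq_of_isCompl hc
  rw [finrank_span_singleton hk0, hd] at h3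
  have hdW : Module.finrank ℂ W = Fintype.card F := by omega
  refine ⟨FDRep.of (V := W) (subRep H W hW), ?_, ?_⟩
  swap
  · exact hdW
  change Irr (V := W) (subRep H W hW)
  have : Nontrivial W := Module.nontrivial_of_finrank_pos (R := ℂ) (by omega)
  apply irr_of_small
  · rintro ⟨v, hv⟩ hf
    have hf' : ∀ g, H g v = v := fun g => congrArg Subtype.val (hf g)
    have := hc.disjoint.le_bot ⟨hfix v hf', hv⟩
    apply Subtype.ext
    simpa using this
  · rw [hdW]; omega

noncomputable def regRep : Representation ℂ (SL2 F) (SL2 F → ℂ) where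
  toFun g := LinearMap.funLeft ℂ ℂ (fun x => g⁻¹ * x)
  map_one' := by
    apply LinearMap.ext
    intro k
    funext v
    simp [LinearMap.funLeft_apply]
  map_mul' g h := by
    apply LinearMap.ext
    intro k
    funext v
    simp [LinearMap.funLeft_apply, mul_assoc]

lemma regRep_apply (g : SL2 F) (h : SL2 F → ℂ) (v : SL2 F) :
    regRep g h v = h (g⁻¹ * v) := rfl

/-- cusp functions -/
def cuspSub : Submodule ℂ (SL2 F → ℂ) where
  carrier := {h | ∀ a b : SL2 F, ∑ x : F, h (a * uu x * b) = 0}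
  zero_mem' := by simp
  add_mem' := by
    intro h k hh hk a b
    simp only [Pi.add_apply, Finset.sum_add_distrib]
    rw [hh, hk, add_zero]
  smul_mem' := by
    intro c h hh a b
    simp only [Pi.smul_apply, ← Finset.smul_sum]
    rw [hh, smul_zero]

lemma cuspSub_inv : InvSub regRep (cuspSub (F := F)) := by
  intro g h hh a b
  simp only [regRep_apply]
  have := hh (g⁻¹ * a) b
  simpa [mul_assoc] using this

lemma two_traces [CharP F 2] (hq : 4 ≤ Fintype.card F) :
    ∃ s t : F, s ≠ t ∧ (∀ a : F, a + a⁻¹ ≠ s) ∧ (∀ a : F, a + a⁻¹ ≠ t) := by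
  classical
  have h2 : (2 : F) = 0 := CharTwo.two_eq_zero
  let f : F → F := fun a => a + a⁻¹
  have hfib : ∀ b ∈ Finset.univ.image f, 2 ≤ (Finset.univ.filter (fun a => f a = b)).card := by
    intro b hb
    obtain ⟨a, -, rfl⟩ := Finset.mem_image.1 hb
    rw [← Nat.succ_le_iff.symm.trans Iff.rfl]
    rw [Finset.one_lt_card]
    by_cases ha0 : a = 0
    · refine ⟨0, ?_, 1, ?_, zero_ne_one⟩
      · simp [ha0]
      · simp only [Finset.mem_filter, Finset.mem_univ, true_and, f, ha0]
        simp only [inv_one, inv_zero]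
        linear_combination h2
    by_cases ha1 : a = 1
    · refine ⟨0, ?_, 1, ?_, zero_ne_one⟩
      · simp only [Finset.mem_filter, Finset.mem_univ, true_and, f, ha1]
        simp only [inv_one, inv_zero]
        linear_combination -h2
      · simp [ha1]
    · refine ⟨a, by simp, a⁻¹, by simp [f, add_comm], ?_⟩
      intro h
      apply ha1
      have h3 : a * a = 1 := by
        nth_rewrite 2 [h]
        exact mul_inv_cancel₀ ha0
      have : (a - 1) * (a - 1) = 0 := by linear_combination h3 + (1 - a) * h2
      linear_combination mul_self_eq_zero.1 this
  have hcard : (Finset.univ.image f).card * 2 ≤ Fintype.card F := by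
    have h3 := Finset.card_eq_sum_card_image f Finset.univ
    rw [Finset.card_univ] at h3
    rw [h3, ← smul_eq_mul]
    exact Finset.card_nsmul_le_sum _ _ _ hfib
  have hc : 1 < ((Finset.univ.image f)ᶜ).card := by
    rw [Finset.card_compl]; omega
  obtain ⟨s, hs, t, ht, hst⟩ := Finset.one_lt_card.1 hc
  refine ⟨s, t, hst, ?_, ?_⟩
  · intro a ha
    rw [Finset.mem_compl] at hs
    exact hs (Finset.mem_image.2 ⟨a, Finset.mem_univ _, ha⟩)
  · intro a ha
    rw [Finset.mem_compl] at ht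
    exact ht (Finset.mem_image.2 ⟨a, Finset.mem_univ _, ha⟩)

lemma cuspSub_ne [CharP F 2] (hq : 4 ≤ Fintype.card F) : (cuspSub (F := F)) ≠ ⊥ := by
  classical
  obtain ⟨s, t, hst, hs, ht⟩ := two_traces hq
  let φ : F → ℂ := fun y => (if y = s then 1 else 0) - (if y = t then 1 else 0)
  have hφsum : ∑ y, φ y = 0 := by
    simp [φ, Finset.sum_sub_distrib]
  have hφ0 : ∀ a : F, φ (a + a⁻¹) = 0 := by
    intro a
    simp [φ, hs a, ht a]
  rw [Submodule.ne_bot_iff]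
  refine ⟨fun g => φ (g 0 0 + g 1 1), ?_, ?_⟩
  · intro a b
    have hk : ∀ x, (a * uu x * b) 0 0 + (a * uu x * b) 1 1 =
        ((b * a) 0 0 + (b * a) 1 1) + x * (b * a) 1 0 := by
      intro x
      simp only [sl_mul_apply, uu, mk4_00, mk4_01, mk4_10, mk4_11]
      ring
    simp only [hk]
    generalize b * a = k
    have hd := sl_det k
    by_cases hc : k 1 0 = 0
    · rw [hc] at hd
      have h0 : k 0 0 ≠ 0 := by
        intro h; rw [h] at hd; simp at hd
      have h1 : k 1 1 = (k 0 0)⁻¹ := by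
        field_simp; linear_combination hd
      simp [hc, h1, hφ0]
    · rw [← hφsum]
      refine Fintype.sum_equiv ((Equiv.mulRight₀ _ hc).trans
        (Equiv.addLeft (k 0 0 + k 1 1))) _ _ ?_
      intro x
      simp [add_assoc]
  · intro h
    have := congrFun h (mk4 s (-1) 1 0 (by ring))
    simp [φ, hst] at this

lemma exists_q_sub_one [CharP F 2] (hq : 4 ≤ Fintype.card F) :
    ∃ V : FDRep ℂ (SL2 F), Irr V.ρ ∧ Module.finrank ℂ V = Fintype.card F - 1 := by
  classical
  obtain ⟨W, hW, hle, hirr⟩ := exists_irr_sub regRep (cuspSub (F := F)) cuspSub_inv (cuspSub_ne hq)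
  refine ⟨FDRep.of (subRep regRep W hW), hirr, ?_⟩
  apply finrank_cusp _ hirr
  rintro ⟨h, hh⟩ hf
  have hf' : ∀ x, regRep (uu x) h = h := fun x => congrArg Subtype.val (hf x)
  apply Subtype.ext
  funext g
  change h g = 0
  have h1 := hle hh 1 g
  have h2 : ∀ x, h (1 * uu x * g) = h g := by
    intro x
    have := congrFun (hf' x) (uu x * g)
    rw [regRep_apply, inv_mul_cancel_left] at this
    rw [one_mul, this]
  simp only [h2, Finset.sum_const, Finset.card_univ, nsmul_eq_mul] at h1
  exact (mul_eq_zero.1 h1).resolve_left card_ne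

end EX

section FINAL

lemma finrank_one_of_trivial {G V : Type} [Group G] [AddCommGroup V] [Module ℂ V]
    (ρ : Representation ℂ G V) (h : Irr ρ) (ht : ∀ g, ρ g = 1) : Module.finrank ℂ V = 1 := by
  obtain ⟨hn, h⟩ := h
  obtain ⟨v, hv⟩ := exists_ne (0 : V)
  rcases h (Submodule.span ℂ {v}) (by
    intro g w hw
    rw [ht]
    exact hw) with h1 | h1
  · exact absurd (Submodule.span_singleton_eq_bot.1 h1) hv
  · have := finrank_span_singleton (K := ℂ) hv
    rw [h1, finrank_top] at this
    exact this

lemma mem_repKer {G : Type} [Group G] (V : FDRep ℂ G) (g : G) :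
    g ∈ repKer V ↔ V.ρ g = 1 := by
  unfold repKer
  rw [MonoidHom.mem_ker, Units.ext_iff]
  rfl

lemma cod_trivial {G : Type} [Group G] (V : FDRep ℂ G) (h : Irr V.ρ)
    (ht : ∀ g, V.ρ g = 1) : cod V = 1 := by
  have h1 : repKer V = ⊤ := by
    rw [Subgroup.eq_top_iff']
    intro g
    exact (mem_repKer V g).2 (ht g)
  have h2 := finrank_one_of_trivial _ h ht
  unfold cod
  rw [h1, Subgroup.index_top]
  have h3 : Module.finrank ℂ V = 1 := h2
  rw [h3]

lemma cod_nontrivial {F : Type} [Field F] [Fintype F] [CharP F 2]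
    (r : F) (hr0 : r ≠ 0) (hr1 : r ≠ 1) (V : FDRep ℂ (SL2 F))
    (ht : ∃ g, V.ρ g ≠ 1) :
    cod V = Fintype.card F * (Fintype.card F - 1) * (Fintype.card F + 1) /
      Module.finrank ℂ V := by
  have hN : (repKer V).Normal := by unfold repKer; infer_instance
  have h1 : repKer V = ⊥ := by
    rcases normal_bot_or_top r hr0 hr1 (repKer V) with h | h
    · exact h
    · obtain ⟨g, hg⟩ := ht
      exact absurd ((mem_repKer V g).1 (h ▸ Subgroup.mem_top g)) hg
  unfold cod
  rw [h1, Subgroup.index_bot, sl_card]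

lemma exists_trivial (G : Type) [Group G] :
    ∃ V : FDRep ℂ G, Irr V.ρ ∧ ∀ g, V.ρ g = 1 := by
  refine ⟨FDRep.of (1 : Representation ℂ G ℂ), ?_, fun g => rfl⟩
  change Irr (1 : Representation ℂ G ℂ)
  refine ⟨inferInstance, fun W _ => ?_⟩
  exact eq_bot_or_eq_top W

lemma codSet_eq {F : Type} [Field F] [Fintype F] [CharP F 2] (hq : 4 ≤ Fintype.card F) :
    codSet (SL2 F) = {1, Fintype.card F * (Fintype.card F - 1),
      Fintype.card F * (Fintype.card F + 1),
      (Fintype.card F - 1) * (Fintype.card F + 1)} := by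
  classical
  obtain ⟨r, hr⟩ : ∃ r : F, r ∉ ({0, 1} : Finset F) := by
    by_contra hcon
    push Not at hcon
    have h1 : (Finset.univ : Finset F) ⊆ {0, 1} := fun x _ => hcon x
    have h2 := Finset.card_le_card h1
    have h3 : ({0, 1} : Finset F).card ≤ 2 := Finset.card_le_two
    rw [Finset.card_univ] at h2
    omega
  have hr0 : r ≠ 0 := by rintro rfl; simp at hr
  have hr1 : r ≠ 1 := by rintro rfl; simp at hr
  have e1 : Fintype.card F * (Fintype.card F - 1) * (Fintype.card F + 1) / (Fintype.card F + 1)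
      = Fintype.card F * (Fintype.card F - 1) := Nat.mul_div_cancel _ (by omega)
  have e2 : Fintype.card F * (Fintype.card F - 1) * (Fintype.card F + 1) / (Fintype.card F - 1)
      = Fintype.card F * (Fintype.card F + 1) := by
    rw [mul_right_comm]; exact Nat.mul_div_cancel _ (by omega)
  have e3 : Fintype.card F * (Fintype.card F - 1) * (Fintype.card F + 1) / (Fintype.card F)
      = (Fintype.card F - 1) * (Fintype.card F + 1) := by
    rw [mul_assoc]; exact Nat.mul_div_cancel_left _ (by omega)
  have key : ∀ V : FDRep ℂ (SL2 F), Irr V.ρ → 2 ≤ Module.finrank ℂ V →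
      cod V = Fintype.card F * (Fintype.card F - 1) * (Fintype.card F + 1) /
      Module.finrank ℂ V := by
    intro V hV h2
    apply cod_nontrivial r hr0 hr1
    by_contra hcon
    push Not at hcon
    have h3 : Module.finrank ℂ V = 1 := finrank_one_of_trivial _ hV hcon
    omega
  ext n
  simp only [Set.mem_insert_iff, Set.mem_singleton_iff]
  constructor
  · rintro ⟨V, hV, rfl⟩
    have hI := irr_of_simple V
    by_cases ht : ∃ g, V.ρ g ≠ 1
    · rw [cod_nontrivial r hr0 hr1 V ht]
      have hc : Module.finrank ℂ V = Fintype.card F - 1 ∨ Module.finrank ℂ V = Fintype.card F ∨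
        Module.finrank ℂ V = Fintype.card F + 1 := finrank_cases V.ρ hI ht hq
      rcases hc with h | h | h <;> rw [h]
      · rw [e2]; tauto
      · rw [e3]; tauto
      · rw [e1]; tauto
    · push Not at ht
      exact Or.inl (cod_trivial V hI ht)
  · rintro (rfl | rfl | rfl | rfl)
    · obtain ⟨V, hV, ht⟩ := exists_trivial (SL2 F)
      exact ⟨V, simple_of_irr V hV, cod_trivial V hV ht⟩
    · obtain ⟨V, hV, hd⟩ := exists_q_add_one (F := F) hq
      exact ⟨V, simple_of_irr V hV, by rw [key V hV (by omega), hd, e1]⟩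
    · obtain ⟨V, hV, hd⟩ := exists_q_sub_one (F := F) hq
      exact ⟨V, simple_of_irr V hV, by rw [key V hV (by omega), hd, e2]⟩
    · obtain ⟨V, hV, hd⟩ := exists_q (F := F) hq
      exact ⟨V, simple_of_irr V hV, by rw [key V hV (by omega), hd, e3]⟩

end FINAL

/-- For `G ≅ SL₂(2^f)` with `f ≥ 2`, `G` has exactly four irreducible
character codegrees: `cod G = {1, 2^{2f} - 2^f, 2^{2f} + 2^f, 2^{2f} - 1}`. -/
theorem stmt18 (f : ℕ) (hf : 2 ≤ f) :
    codSet (Matrix.SpecialLinearGroup (Fin 2) (GaloisField 2 f)) =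
        {1, 2 ^ (2 * f) - 2 ^ f, 2 ^ (2 * f) + 2 ^ f, 2 ^ (2 * f) - 1} ∧
      (codSet (Matrix.SpecialLinearGroup (Fin 2) (GaloisField 2 f))).ncard = 4 := by
  have hfin : Fintype (GaloisField 2 f) := Fintype.ofFinite _
  have hcard : Fintype.card (GaloisField 2 f) = 2 ^ f := by
    rw [← Nat.card_eq_fintype_card]
    exact GaloisField.card 2 f (by omega)
  have hq : 4 ≤ 2 ^ f := by
    calc 4 = 2 ^ 2 := by norm_num
      _ ≤ 2 ^ f := Nat.pow_le_pow_right (by norm_num) hf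
  have hmain := codSet_eq (F := GaloisField 2 f) (by rw [hcard]; exact hq)
  rw [hcard] at hmain
  have hpow : 2 ^ (2 * f) = 2 ^ f * 2 ^ f := by rw [← pow_add]; congr 1; omega
  rw [hpow]
  generalize 2 ^ f = q at *
  obtain ⟨k, rfl⟩ : ∃ k, q = k + 4 := ⟨q - 4, by omega⟩
  have a1 : (k + 4) * (k + 4) - (k + 4) = (k + 4) * (k + 4 - 1) := by
    rw [Nat.mul_sub, mul_one]
  have a2 : (k + 4) * (k + 4) + (k + 4) = (k + 4) * (k + 4 + 1) := by ring
  have a3 : (k + 4) * (k + 4) - 1 = (k + 4 - 1) * (k + 4 + 1) := by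
    have : k + 4 - 1 = k + 3 := rfl
    rw [this]
    apply Nat.sub_eq_of_eq_add
    ring
  have hset : codSet (Matrix.SpecialLinearGroup (Fin 2) (GaloisField 2 f)) =
      {1, (k + 4) * (k + 4) - (k + 4), (k + 4) * (k + 4) + (k + 4), (k + 4) * (k + 4) - 1} := by
    rw [a1, a2, a3]
    exact hmain
  refine ⟨hset, ?_⟩
  rw [hset]
  have hb : (k + 4) * 4 ≤ (k + 4) * (k + 4) := Nat.mul_le_mul_left _ (by omega)
  generalize (k + 4) * (k + 4) = m at hb
  rw [Set.ncard_insert_of_notMem, Set.ncard_insert_of_notMem, Set.ncard_insert_of_notMem,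
    Set.ncard_singleton]
  all_goals
    simp only [Set.mem_insert_iff, Set.mem_singleton_iff]
    omega
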